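/- arXiv:1801.06398 — 2 statements merged into one kernel-verified Lean document; each statement's English description precedes it below -/
import Mathlib

section
/- Estimate on the trace of a sum of products (finite-dimensional form): let T be an n×n Hermitian complex matrix and let S₁, …, S_k be positive semidefinite n×n Hermitian matrices with S₁² + ⋯ + S_k² ⪯ I. Then Tr((Σ_{j=1}^{k} S_j T S_j)₋) ≤ Σ_{j=1}^{k} Tr((S_j T S_j)₋) ≤ Tr(T₋). -/
noncomputable section

open Matrix Finset
open scoped ComplexOrder

/-- Trace of the negative part of a matrix: Σᵢ max(0, −λᵢ) over the eigenvalues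
of a Hermitian matrix (junk value 0 for non-Hermitian matrices). -/
def trNeg {n : ℕ} (X : Matrix (Fin n) (Fin n) ℂ) : ℝ :=
  if h : X.IsHermitian then ∑ i, max 0 (-(h.eigenvalues i)) else 0

/-- Loewner order: X ⪯ Y iff Y − X is positive semidefinite. -/
def loewnerLE {n : ℕ} (X Y : Matrix (Fin n) (Fin n) ℂ) : Prop :=
  (Y - X).PosSemidef

theorem exists_negPart {n : ℕ} (X : Matrix (Fin n) (Fin n) ℂ) (hX : X.IsHermitian) :
    ∃ P : Matrix (Fin n) (Fin n) ℂ, P.PosSemidef ∧ (X + P).PosSemidef ∧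
      P.trace = (trNeg X : ℂ) := by
  set U : Matrix (Fin n) (Fin n) ℂ := (hX.eigenvectorUnitary : Matrix (Fin n) (Fin n) ℂ) with hU
  have hUU : Uᴴ * U = 1 := by
    have := Unitary.coe_star_mul_self hX.eigenvectorUnitary
    simpa [hU, star_eq_conjTranspose] using this
  have hspec : X = U * diagonal (fun i => ((hX.eigenvalues i : ℝ) : ℂ)) * Uᴴ := by
    conv_lhs => rw [hX.spectral_theorem, Unitary.conjStarAlgAut_apply]
    rfl
  set d : Fin n → ℂ := fun i => ((max 0 (-(hX.eigenvalues i)) : ℝ) : ℂ) with hd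
  refine ⟨U * diagonal d * Uᴴ, ?_, ?_, ?_⟩
  · apply PosSemidef.mul_mul_conjTranspose_same
    apply PosSemidef.diagonal
    intro i
    simp only [hd, Pi.zero_apply]
    exact_mod_cast le_max_left _ _
  · have : X + U * diagonal d * Uᴴ =
        U * diagonal (fun i => ((hX.eigenvalues i : ℝ) : ℂ) + d i) * Uᴴ := by
      conv_lhs => rw [hspec]
      rw [← add_mul, ← mul_add, diagonal_add]
    rw [this]
    apply PosSemidef.mul_mul_conjTranspose_same
    apply PosSemidef.diagonal
    intro i
    simp only [hd, Pi.zero_apply]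
    rw [← Complex.ofReal_add, Complex.zero_le_real]
    linarith [le_max_right 0 (-(hX.eigenvalues i))]
  · rw [trace_mul_comm, ← mul_assoc, hUU, one_mul, trace_diagonal, trNeg, dif_pos hX]
    simp only [hd, Complex.ofReal_sum]

theorem trNeg_le_trace {n : ℕ} (X P : Matrix (Fin n) (Fin n) ℂ) (hP : P.PosSemidef)
    (hXP : (X + P).PosSemidef) : (trNeg X : ℂ) ≤ P.trace := by
  have hX : X.IsHermitian := by
    have := hXP.isHermitian.sub hP.isHermitian
    simpa using this
  set U : Matrix (Fin n) (Fin n) ℂ := (hX.eigenvectorUnitary : Matrix (Fin n) (Fin n) ℂ) with hU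
  have hUU : Uᴴ * U = 1 := by
    have := Unitary.coe_star_mul_self hX.eigenvectorUnitary
    simpa [hU, star_eq_conjTranspose] using this
  have hUU2 : U * Uᴴ = 1 := mul_eq_one_comm.mp hUU
  have hspec : X = U * diagonal (fun i => ((hX.eigenvalues i : ℝ) : ℂ)) * Uᴴ := by
    conv_lhs => rw [hX.spectral_theorem, Unitary.conjStarAlgAut_apply]
    rfl
  have hdiag : Uᴴ * X * U = diagonal (fun i => ((hX.eigenvalues i : ℝ) : ℂ)) := by
    conv_lhs => rw [hspec]
    rw [mul_assoc, mul_assoc, hUU, mul_one, ← mul_assoc, hUU, one_mul]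
  have h1 := hP.conjTranspose_mul_mul_same U
  have h2 := hXP.conjTranspose_mul_mul_same U
  rw [mul_add, add_mul, hdiag] at h2
  have htr : P.trace = (Uᴴ * P * U).trace := by
    rw [trace_mul_comm, ← mul_assoc, hUU2, one_mul]
  rw [htr, trNeg, dif_pos hX, Complex.ofReal_sum, trace]
  apply Finset.sum_le_sum
  intro i _
  have a1 := h1.diag_nonneg (i := i)
  have a2 := h2.diag_nonneg (i := i)
  rw [Matrix.add_apply, diagonal_apply_eq] at a2
  rw [diag_apply]
  rcases max_choice 0 (-(hX.eigenvalues i)) with h | h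
  · rw [h]; simpa using a1
  · rw [h, Complex.ofReal_neg]
    exact neg_le_iff_add_nonneg'.mpr a2

open scoped MatrixOrder in
theorem trace_mul_nonneg_of_posSemidef {n : ℕ} (P Q : Matrix (Fin n) (Fin n) ℂ)
    (hP : P.PosSemidef) (hQ : Q.PosSemidef) : 0 ≤ (P * Q).trace := by
  obtain ⟨B, rfl⟩ : ∃ B : Matrix (Fin n) (Fin n) ℂ, P = Bᴴ * B :=
    CStarAlgebra.nonneg_iff_eq_star_mul_self.mp hP.nonneg
  rw [mul_assoc, trace_mul_comm]
  exact (hQ.mul_mul_conjTranspose_same B).trace_nonneg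

/-- **Estimate on the trace of a sum of products.** For a Hermitian matrix T and
positive semidefinite matrices S₁,…,S_k with Σⱼ Sⱼ² ⪯ I,
Tr((Σⱼ SⱼTSⱼ)₋) ≤ Σⱼ Tr((SⱼTSⱼ)₋) ≤ Tr(T₋). -/
theorem trNeg_sum_products_le (n k : ℕ) (T : Matrix (Fin n) (Fin n) ℂ)
    (hT : T.IsHermitian) (S : Fin k → Matrix (Fin n) (Fin n) ℂ)
    (hS : ∀ j, (S j).PosSemidef)
    (hsum : loewnerLE (∑ j, S j ^ 2) 1) :
    trNeg (∑ j, S j * T * S j) ≤ ∑ j, trNeg (S j * T * S j) ∧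
      ∑ j, trNeg (S j * T * S j) ≤ trNeg T := by
  have hST : ∀ j, (S j * T * S j).IsHermitian := fun j => by
    have := isHermitian_mul_mul_conjTranspose (S j) hT
    rwa [(hS j).isHermitian.eq] at this
  constructor
  · choose P hP1 hP2 hP3 using fun j => exists_negPart _ (hST j)
    have h := trNeg_le_trace (∑ j, S j * T * S j) (∑ j, P j)
      (posSemidef_sum _ fun j _ => hP1 j)
      (by rw [← Finset.sum_add_distrib]; exact posSemidef_sum _ fun j _ => hP2 j)
    rw [trace_sum, Finset.sum_congr rfl fun j _ => hP3 j, ← Complex.ofReal_sum] at h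
    exact_mod_cast h
  · obtain ⟨P, hP1, hP2, hP3⟩ := exists_negPart T hT
    have key : ∀ j, (trNeg (S j * T * S j) : ℂ) ≤ (P * S j ^ 2).trace := fun j => by
      have e := (hS j).isHermitian.eq
      have h1 := hP1.mul_mul_conjTranspose_same (S j)
      have h2 := hP2.mul_mul_conjTranspose_same (S j)
      rw [e] at h1 h2
      rw [mul_add, add_mul] at h2
      have h := trNeg_le_trace _ _ h1 h2
      have e2 : (S j * P * S j).trace = (P * S j ^ 2).trace := by
        rw [mul_assoc, trace_mul_comm, mul_assoc, ← pow_two]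
      rwa [e2] at h
    have h := trace_mul_nonneg_of_posSemidef P _ hP1 hsum
    rw [mul_sub, mul_one, trace_sub, sub_nonneg, hP3, Finset.mul_sum, trace_sum] at h
    have h' := (Finset.sum_le_sum fun j _ => key j).trans h
    rw [← Complex.ofReal_sum] at h'
    exact_mod_cast h'

end
end

section
/- Pull-out formula (finite-dimensional Hansen–Pedersen inequality): let 0 < s ≤ 1, let A₁, …, A_k be positive semidefinite n×n Hermitian complex matrices, and let S₁, …, S_k be positive semidefinite n×n Hermitian matrices with S₁² + ⋯ + S_k² = I. Then (Σ_{j=1}^{k} S_j A_j S_j)^s ⪰ Σ_{j=1}^{k} S_j A_j^s S_j in the Loewner order. -/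
noncomputable section

open Matrix Finset
open scoped ComplexOrder

/-- Real power X^s of a matrix through the spectral functional calculus of a
Hermitian matrix (each eigenvalue raised to the real power s); junk value 0
for non-Hermitian matrices. -/
def matRPow {n : ℕ} (X : Matrix (Fin n) (Fin n) ℂ) (s : ℝ) :
    Matrix (Fin n) (Fin n) ℂ :=
  if h : X.IsHermitian then
    (h.eigenvectorUnitary : Matrix (Fin n) (Fin n) ℂ) *
      Matrix.diagonal (fun i => ((h.eigenvalues i ^ s : ℝ) : ℂ)) *
      (star (h.eigenvectorUnitary : Matrix (Fin n) (Fin n) ℂ))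
  else 0

/-- functional calculus through the diagonalization -/
def hcalc {n : ℕ} {X : Matrix (Fin n) (Fin n) ℂ} (h : X.IsHermitian) (f : ℝ → ℝ) :
    Matrix (Fin n) (Fin n) ℂ :=
  (h.eigenvectorUnitary : Matrix (Fin n) (Fin n) ℂ) *
      Matrix.diagonal (fun i => ((f (h.eigenvalues i) : ℝ) : ℂ)) *
      (star (h.eigenvectorUnitary : Matrix (Fin n) (Fin n) ℂ))

lemma hcalc_mul {n : ℕ} {X : Matrix (Fin n) (Fin n) ℂ} (h : X.IsHermitian) (f g : ℝ → ℝ) :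
    hcalc h f * hcalc h g = hcalc h (fun x => f x * g x) := by
  have hu : star (h.eigenvectorUnitary : Matrix (Fin n) (Fin n) ℂ) * h.eigenvectorUnitary = 1 :=
    Unitary.coe_star_mul_self _
  unfold hcalc
  set U := (h.eigenvectorUnitary : Matrix (Fin n) (Fin n) ℂ)
  calc _ = U * diagonal (fun i => ((f (h.eigenvalues i) : ℝ) : ℂ)) * (star U * U) *
        diagonal (fun i => ((g (h.eigenvalues i) : ℝ) : ℂ)) * star U := by
        simp only [Matrix.mul_assoc]
    _ = _ := by
        rw [hu, Matrix.mul_one, Matrix.mul_assoc U, Matrix.diagonal_mul_diagonal]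
        simp

lemma hcalc_add {n : ℕ} {X : Matrix (Fin n) (Fin n) ℂ} (h : X.IsHermitian) (f g : ℝ → ℝ) :
    hcalc h f + hcalc h g = hcalc h (fun x => f x + g x) := by
  unfold hcalc
  rw [← Matrix.add_mul, ← Matrix.mul_add, Matrix.diagonal_add]
  simp

lemma hcalc_const {n : ℕ} {X : Matrix (Fin n) (Fin n) ℂ} (h : X.IsHermitian) (c : ℝ) :
    hcalc h (fun _ => c) = (c : ℂ) • 1 := by
  have hu : (h.eigenvectorUnitary : Matrix (Fin n) (Fin n) ℂ) *
      star (h.eigenvectorUnitary : Matrix (Fin n) (Fin n) ℂ) = 1 :=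
    Unitary.coe_mul_star_self _
  unfold hcalc
  have : (diagonal fun _ : Fin n => (c : ℂ)) = (c : ℂ) • (1 : Matrix (Fin n) (Fin n) ℂ) := by
    rw [Matrix.smul_one_eq_diagonal]
  rw [this]
  simp [hu]

lemma hcalc_id {n : ℕ} {X : Matrix (Fin n) (Fin n) ℂ} (h : X.IsHermitian) :
    hcalc h (fun x => x) = X := by
  conv_rhs => rw [h.spectral_theorem]
  simp only [hcalc, Unitary.conjStarAlgAut_apply]
  rfl

lemma hcalc_congr {n : ℕ} {X : Matrix (Fin n) (Fin n) ℂ} (h : X.PosSemidef) {f g : ℝ → ℝ}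
    (hfg : ∀ x, 0 ≤ x → f x = g x) : hcalc h.1 f = hcalc h.1 g := by
  unfold hcalc
  congr 3
  ext i
  rw [hfg _ (h.eigenvalues_nonneg i)]

lemma hcalc_isHermitian {n : ℕ} {X : Matrix (Fin n) (Fin n) ℂ} (h : X.IsHermitian) (f : ℝ → ℝ) :
    (hcalc h f).IsHermitian := by
  unfold hcalc Matrix.IsHermitian
  simp only [Matrix.conjTranspose_mul, Matrix.star_eq_conjTranspose,
    Matrix.conjTranspose_conjTranspose, Matrix.diagonal_conjTranspose, Matrix.mul_assoc]
  congr 3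
  ext i
  simp

lemma hcalc_form {n : ℕ} {X : Matrix (Fin n) (Fin n) ℂ} (h : X.IsHermitian) (x : Fin n → ℂ) :
    ∃ w : Fin n → ℝ, (∀ i, 0 ≤ w i) ∧ ∀ f : ℝ → ℝ,
      star x ⬝ᵥ (hcalc h f *ᵥ x) = ((∑ i, f (h.eigenvalues i) * w i : ℝ) : ℂ) := by
  set U := (h.eigenvectorUnitary : Matrix (Fin n) (Fin n) ℂ) with hU
  refine ⟨fun i => Complex.normSq ((star U *ᵥ x) i), fun i => Complex.normSq_nonneg _, fun f => ?_⟩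
  have h1 : star x ᵥ* U = star (star U *ᵥ x) := by
    rw [Matrix.star_mulVec, Matrix.star_eq_conjTranspose, Matrix.conjTranspose_conjTranspose]
  unfold hcalc
  rw [← hU, ← Matrix.mulVec_mulVec, ← Matrix.mulVec_mulVec, Matrix.dotProduct_mulVec, h1]
  simp only [dotProduct, Matrix.mulVec_diagonal, Pi.star_apply]
  push_cast
  refine Finset.sum_congr rfl fun i _ => ?_
  rw [Complex.normSq_eq_conj_mul_self]
  simp only [RCLike.star_def]
  ring

lemma hcalc_posSemidef {n : ℕ} {X : Matrix (Fin n) (Fin n) ℂ} (h : X.PosSemidef) {f : ℝ → ℝ}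
    (hf : ∀ x, 0 ≤ x → 0 ≤ f x) : (hcalc h.1 f).PosSemidef := by
  refine Matrix.PosSemidef.of_dotProduct_mulVec_nonneg (hcalc_isHermitian _ _) fun x => ?_
  obtain ⟨w, hw, hw2⟩ := hcalc_form h.1 x
  rw [hw2]
  exact_mod_cast Finset.sum_nonneg fun i _ => mul_nonneg (hf _ (h.eigenvalues_nonneg i)) (hw i)

lemma hcalc_resolvent {n : ℕ} {X : Matrix (Fin n) (Fin n) ℂ} (h : X.PosSemidef) {t : ℝ}
    (ht : 0 < t) :
    hcalc h.1 (fun x => (t + x)⁻¹) * ((t : ℂ) • 1 + X) = 1 ∧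
    ((t : ℂ) • 1 + X) * hcalc h.1 (fun x => (t + x)⁻¹) = 1 := by
  have h1 : (t : ℂ) • 1 + X = hcalc h.1 (fun x => t + x) := by
    rw [← hcalc_add h.1 (fun _ => t) (fun x => x), hcalc_const, hcalc_id]
  have h2 : hcalc h.1 (fun _ => 1) = 1 := by simp [hcalc_const]
  rw [h1, hcalc_mul, hcalc_mul, ← h2]
  constructor <;> refine hcalc_congr h fun x hx => ?_
  · exact inv_mul_cancel₀ (by positivity)
  · exact mul_inv_cancel₀ (by positivity)

lemma sum_conj_posSemidef {n k : ℕ} {A S : Fin k → Matrix (Fin n) (Fin n) ℂ}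
    (hA : ∀ j, (A j).PosSemidef) (hS : ∀ j, (S j).PosSemidef) :
    (∑ j, S j * A j * S j).PosSemidef := by
  refine Matrix.posSemidef_sum _ fun j _ => ?_
  have := (hA j).conjTranspose_mul_mul_same (S j)
  rwa [(hS j).1.eq] at this

lemma resolvent_ineq {n k : ℕ} {A S : Fin k → Matrix (Fin n) (Fin n) ℂ}
    (hA : ∀ j, (A j).PosSemidef) (hS : ∀ j, (S j).PosSemidef)
    (hsum : ∑ j, S j ^ 2 = 1) {t : ℝ} (ht : 0 < t) :
    (∑ j, S j * hcalc (hA j).1 (fun x => (t + x)⁻¹) * S j -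
      hcalc (sum_conj_posSemidef hA hS).1 (fun x => (t + x)⁻¹)).PosSemidef := by
  have hB := hcalc_resolvent (sum_conj_posSemidef hA hS) ht
  have hRh := hcalc_isHermitian (sum_conj_posSemidef hA hS).1 (fun x => (t + x)⁻¹)
  set R := hcalc (sum_conj_posSemidef hA hS).1 (fun x => (t + x)⁻¹) with hR
  set r : Fin k → Matrix (Fin n) (Fin n) ℂ := fun j => hcalc (hA j).1 (fun x => (t + x)⁻¹) with hr
  set M : Fin k → Matrix (Fin n) (Fin n) ℂ := fun j => (t : ℂ) • 1 + A j with hM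
  have hr1 : ∀ j, r j * M j = 1 := fun j => (hcalc_resolvent (hA j) ht).1
  have hr2 : ∀ j, M j * r j = 1 := fun j => (hcalc_resolvent (hA j) ht).2
  have hMB : ∑ j, S j * M j * S j = (t : ℂ) • 1 + ∑ j, S j * A j * S j := by
    rw [← hsum, Finset.smul_sum, ← Finset.sum_add_distrib]
    refine Finset.sum_congr rfl fun j _ => ?_
    simp only [hM, Matrix.mul_add, Matrix.add_mul, Matrix.mul_smul, Matrix.smul_mul,
      Matrix.mul_one, pow_two]
  have hMh : ∀ j, (M j)ᴴ = M j := fun j => by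
    simp [hM, Matrix.conjTranspose_add, Matrix.conjTranspose_smul, (hA j).1.eq]
  have key : ∑ j, S j * r j * S j - R =
      ∑ j, (S j - M j * S j * R)ᴴ * r j * (S j - M j * S j * R) := by
    have h1 : ∀ j, (S j - M j * S j * R)ᴴ * r j * (S j - M j * S j * R) =
        S j * r j * S j - S j ^ 2 * R - R * S j ^ 2 + R * (S j * M j * S j) * R := fun j => by
      rw [Matrix.conjTranspose_sub, Matrix.conjTranspose_mul, Matrix.conjTranspose_mul, hMh,
        (hS j).1.eq, hRh.eq]
      calc _ = S j * r j * S j - S j * (r j * M j) * S j * R - R * S j * (M j * r j) * S j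
            + R * S j * (M j * r j) * M j * S j * R := by noncomm_ring
        _ = _ := by rw [hr1, hr2]; noncomm_ring
    simp only [h1, Finset.sum_add_distrib, Finset.sum_sub_distrib, ← Finset.sum_mul,
      ← Finset.mul_sum, hsum, hMB]
    rw [Matrix.mul_assoc, hB.2]
    noncomm_ring
  rw [key]
  refine Matrix.posSemidef_sum _ fun j _ => ?_
  refine Matrix.PosSemidef.conjTranspose_mul_mul_same ?_ _
  exact hcalc_posSemidef (hA j) fun x hx => by positivity

lemma form_conj {n : ℕ} {S : Matrix (Fin n) (Fin n) ℂ} (hS : S.IsHermitian)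
    (Y : Matrix (Fin n) (Fin n) ℂ) (x : Fin n → ℂ) :
    star x ⬝ᵥ ((S * Y * S) *ᵥ x) = star (S *ᵥ x) ⬝ᵥ (Y *ᵥ (S *ᵥ x)) := by
  rw [Matrix.star_mulVec, hS.eq, ← Matrix.mulVec_mulVec, ← Matrix.mulVec_mulVec,
    Matrix.dotProduct_mulVec]

lemma integrand_ineq {n k : ℕ} {A S : Fin k → Matrix (Fin n) (Fin n) ℂ}
    (hA : ∀ j, (A j).PosSemidef) (hS : ∀ j, (S j).PosSemidef)
    (hsum : ∑ j, S j ^ 2 = 1) {s t : ℝ} (ht : 0 < t) :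
    (hcalc (sum_conj_posSemidef hA hS).1 (Real.rpowIntegrand₀₁ s t) -
      ∑ j, S j * hcalc (hA j).1 (Real.rpowIntegrand₀₁ s t) * S j).PosSemidef := by
  have h0 : ∀ (X : Matrix (Fin n) (Fin n) ℂ) (h : X.IsHermitian),
      hcalc h (Real.rpowIntegrand₀₁ s t) = ((t ^ s * t⁻¹ : ℝ) : ℂ) • 1 -
        ((t ^ s : ℝ) : ℂ) • hcalc h (fun x => (t + x)⁻¹) := fun X h => by
    rw [eq_sub_iff_add_eq, ← hcalc_const h]
    have : ((t ^ s : ℝ) : ℂ) • hcalc h (fun x => (t + x)⁻¹) =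
        hcalc h (fun x => t ^ s * (t + x)⁻¹) := by
      rw [← hcalc_mul h (fun _ => t ^ s), hcalc_const, Matrix.smul_mul, Matrix.one_mul]
    rw [this, hcalc_add]
    congr 1
    ext x
    rw [Real.rpowIntegrand₀₁]
    ring
  have h2 := (resolvent_ineq hA hS hsum ht).smul
    (show (0 : ℂ) ≤ ((t ^ s : ℝ) : ℂ) by exact_mod_cast Real.rpow_nonneg ht.le s)
  convert h2 using 1
  simp only [h0, Matrix.mul_sub, Matrix.sub_mul, Matrix.mul_smul, Matrix.smul_mul, Matrix.mul_one,
    Finset.sum_sub_distrib, ← Finset.smul_sum, ← pow_two, hsum, smul_sub]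
  abel

/-- **Pull-out formula (finite-dimensional Hansen–Pedersen inequality).** For
0 < s ≤ 1, positive semidefinite A₁,…,A_k and positive semidefinite S₁,…,S_k with
Σⱼ Sⱼ² = I, one has (Σⱼ SⱼAⱼSⱼ)^s ⪰ Σⱼ SⱼAⱼ^sSⱼ in the Loewner order. -/
theorem pull_out_formula (s : ℝ) (hs0 : 0 < s) (hs1 : s ≤ 1)
    (n k : ℕ) (A S : Fin k → Matrix (Fin n) (Fin n) ℂ)
    (hA : ∀ j, (A j).PosSemidef) (hS : ∀ j, (S j).PosSemidef)
    (hsum : ∑ j, S j ^ 2 = 1) :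
    loewnerLE (∑ j, S j * matRPow (A j) s * S j)
      (matRPow (∑ j, S j * A j * S j) s) := by
  have hB := sum_conj_posSemidef hA hS
  have e1 : ∀ (X : Matrix (Fin n) (Fin n) ℂ) (h : X.IsHermitian),
      matRPow X s = hcalc h (fun x => x ^ s) := fun X h => by
    simp only [matRPow, dif_pos h, hcalc]
  unfold loewnerLE
  rw [e1 _ hB.1]
  simp only [fun j => e1 _ (hA j).1]
  rcases hs1.eq_or_lt with rfl | hs1
  · simp only [Real.rpow_one, hcalc_id, sub_self]
    exact Matrix.PosSemidef.zero
  have hs : s ∈ Set.Ioo (0 : ℝ) 1 := ⟨hs0, hs1⟩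
  obtain ⟨μ, hμ⟩ := Real.exists_measure_rpow_eq_integral_rpowIntegrand₀₁ hs
  refine Matrix.PosSemidef.of_dotProduct_mulVec_nonneg ?_ fun x => ?_
  · refine (hcalc_isHermitian _ _).sub ?_
    exact (sum_conj_posSemidef (fun j => hcalc_posSemidef (hA j)
      fun x hx => Real.rpow_nonneg hx s) hS).1
  obtain ⟨w, hw, hwf⟩ := hcalc_form hB.1 x
  choose v hv hvf using fun j => hcalc_form (hA j).1 (S j *ᵥ x)
  have form : ∀ f : ℝ → ℝ, star x ⬝ᵥ ((hcalc hB.1 f - ∑ j, S j * hcalc (hA j).1 f * S j) *ᵥ x) =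
      ((∑ i, f (hB.1.eigenvalues i) * w i -
        ∑ j, ∑ i, f ((hA j).1.eigenvalues i) * v j i : ℝ) : ℂ) := fun f => by
    rw [Matrix.sub_mulVec, dotProduct_sub, hwf, Matrix.sum_mulVec, dotProduct_sum]
    simp only [fun j => form_conj (hS j).1 (hcalc (hA j).1 f) x, hvf]
    push_cast
    rfl
  rw [form]
  have iB : ∀ i, MeasureTheory.IntegrableOn (fun t => Real.rpowIntegrand₀₁ s t
      (hB.1.eigenvalues i) * w i) (Set.Ioi 0) μ := fun i =>
    (hμ _ (hB.eigenvalues_nonneg i)).1.mul_const _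
  have iA : ∀ j i, MeasureTheory.IntegrableOn (fun t => Real.rpowIntegrand₀₁ s t
      ((hA j).1.eigenvalues i) * v j i) (Set.Ioi 0) μ := fun j i =>
    (hμ _ ((hA j).eigenvalues_nonneg i)).1.mul_const _
  have hI : ∑ i, (hB.1.eigenvalues i) ^ s * w i -
        ∑ j, ∑ i, ((hA j).1.eigenvalues i) ^ s * v j i =
      ∫ t in Set.Ioi 0, (∑ i, Real.rpowIntegrand₀₁ s t (hB.1.eigenvalues i) * w i -
        ∑ j, ∑ i, Real.rpowIntegrand₀₁ s t ((hA j).1.eigenvalues i) * v j i) ∂μ := by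
    rw [MeasureTheory.integral_sub
      (MeasureTheory.integrable_finsetSum _ fun i _ => iB i)
      (MeasureTheory.integrable_finsetSum _ fun j _ =>
        MeasureTheory.integrable_finsetSum _ fun i _ => iA j i),
      MeasureTheory.integral_finsetSum _ fun i _ => iB i,
      MeasureTheory.integral_finsetSum _ fun j _ =>
        MeasureTheory.integrable_finsetSum _ fun i _ => iA j i]
    congr 1
    · refine Finset.sum_congr rfl fun i _ => ?_
      rw [MeasureTheory.integral_mul_const, ← (hμ _ (hB.eigenvalues_nonneg i)).2]
    · refine Finset.sum_congr rfl fun j _ => ?_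
      rw [MeasureTheory.integral_finsetSum _ fun i _ => iA j i]
      refine Finset.sum_congr rfl fun i _ => ?_
      rw [MeasureTheory.integral_mul_const, ← (hμ _ ((hA j).eigenvalues_nonneg i)).2]
  rw [hI]
  refine Complex.zero_le_real.mpr (MeasureTheory.setIntegral_nonneg measurableSet_Ioi
    fun t ht => ?_)
  have := (integrand_ineq hA hS hsum (s := s) ht).dotProduct_mulVec_nonneg x
  rw [form] at this
  exact Complex.zero_le_real.mp this

end
end
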